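/- Let y ∈ ℂ, z ∈ ℝ, and let θ ∈ ℝⁿ satisfy 1 + Z_D·θ ≠ 0. Then T(θ) = (e + Z_N·θ)/(1 + Z_D·θ) satisfies 2Re(conj(y)·T(θ)) + z ≤ 0 if and only if the augmented real vector θ̄ = [θᵀ, 1]ᵀ satisfies θ̄ᵀ(A₂*·y + conj(y)·A₂ + z·A₁)θ̄ ≤ 0, where A₁ = [[Z_D*Z_D, Z_D*],[Z_D, 1]] and A₂ = [[Z_D*Z_N, Z_D*e],[Z_N, e]] are matrices in ℂ^{(n+1)×(n+1)}. -/

import Mathlib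

open Matrix

/-- The Hermitian matrix `A₁ = [[Z_D*Z_D, Z_D*],[Z_D, 1]] ∈ ℂ^{(n+1)×(n+1)}`. -/
def A1mat {n : ℕ} (ZD : Fin n → ℂ) : Matrix (Fin n ⊕ Unit) (Fin n ⊕ Unit) ℂ :=
  Matrix.fromBlocks
    (Matrix.of fun i j => starRingEnd ℂ (ZD i) * ZD j)
    (Matrix.of fun i _ => starRingEnd ℂ (ZD i))
    (Matrix.of fun _ j => ZD j)
    (Matrix.of fun _ _ => 1)

/-- The matrix `A₂ = [[Z_D*Z_N, Z_D*e],[Z_N, e]] ∈ ℂ^{(n+1)×(n+1)}`. -/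
def A2mat {n : ℕ} (e : ℂ) (ZN ZD : Fin n → ℂ) : Matrix (Fin n ⊕ Unit) (Fin n ⊕ Unit) ℂ :=
  Matrix.fromBlocks
    (Matrix.of fun i j => starRingEnd ℂ (ZD i) * ZN j)
    (Matrix.of fun i _ => starRingEnd ℂ (ZD i) * e)
    (Matrix.of fun _ j => ZN j)
    (Matrix.of fun _ _ => e)

/-- The transfer function value `T(θ) = (e + Z_N·θ)/(1 + Z_D·θ)`. -/
noncomputable def Tval {n : ℕ} (e : ℂ) (ZN ZD : Fin n → ℂ) (θ : Fin n → ℝ) : ℂ :=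
  (e + ∑ i, ZN i * (θ i : ℂ)) / (1 + ∑ i, ZD i * (θ i : ℂ))

/-- The augmented vector `θ̄ = [θᵀ, 1]ᵀ`, regarded as a complex vector. -/
def thetaBar {n : ℕ} (θ : Fin n → ℝ) : Fin n ⊕ Unit → ℂ :=
  Sum.elim (fun i => (θ i : ℂ)) (fun _ => (1 : ℂ))

/-!
With `d = [Z_D, 1]` and `m = [Z_N, e]`, the matrices `A₁ = d*d` and `A₂ = d*m` have rank at most
one, while `T(θ) = (m·θ̄)/(d·θ̄)`. Substituting `m·θ̄ = T(θ) (d·θ̄)`, the quadratic form factors as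
`θ̄ᵀ(A₂*y + conj(y)A₂ + zA₁)θ̄ = |d·θ̄|² (2Re(conj(y)T(θ)) + z)`, and the factor `|d·θ̄|²` is
positive.
-/

section QuadraticForm

variable {ι R : Type*} [CommSemiring R] [StarRing R]

/-- The matrix `A₂*y + conj(y)A₂ + zA₁` for `A₁ = d*d` and `A₂ = d*m`, whose quadratic form
expresses the dissipation inequality for the ratio `(m·v)/(d·v)` of linear forms in `v`. The row
vectors `d` and `m` are encoded as functions. -/
def dissipationMatrix (d m : ι → R) (y z : R) : Matrix ι ι R :=
  y • (vecMulVec (star d) m)ᴴ + star y • vecMulVec (star d) m + z • vecMulVec (star d) d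

variable [Fintype ι]

theorem star_dotProduct_vecMulVec_star_mulVec (a b v : ι → R) :
    star v ⬝ᵥ (vecMulVec (star a) b *ᵥ v) = star (a ⬝ᵥ v) * (b ⬝ᵥ v) := by
  rw [vecMulVec_mulVec, dotProduct_smul, star_dotProduct_star, op_smul_eq_mul]

theorem star_dotProduct_dissipationMatrix_mulVec {d m v : ι → R} {t : R}
    (ht : m ⬝ᵥ v = t * (d ⬝ᵥ v)) (y z : R) :
    star v ⬝ᵥ (dissipationMatrix d m y z *ᵥ v) =
      star (d ⬝ᵥ v) * (d ⬝ᵥ v) * (y * star t + star y * t + z) := by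
  simp only [dissipationMatrix, conjTranspose_vecMulVec, star_star, add_mulVec, smul_mulVec,
    dotProduct_add, dotProduct_smul, star_dotProduct_vecMulVec_star_mulVec, smul_eq_mul, ht,
    star_mul']
  ring

end QuadraticForm

section RCLike

variable {ι 𝕜 : Type*} [RCLike 𝕜]

theorem mul_star_add_star_mul_eq_two_mul_re (y t : 𝕜) :
    y * star t + star y * t = (2 * RCLike.re (star y * t) : ℝ) := by
  have h := RCLike.add_conj (star y * t)
  rw [starRingEnd_apply, star_mul', star_star, add_comm] at h
  exact_mod_cast h

variable [Fintype ι]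

theorem re_star_dotProduct_dissipationMatrix_mulVec {d m v : ι → 𝕜} {t : 𝕜}
    (ht : m ⬝ᵥ v = t * (d ⬝ᵥ v)) (y : 𝕜) (z : ℝ) :
    RCLike.re (star v ⬝ᵥ (dissipationMatrix d m y (z : 𝕜) *ᵥ v)) =
      ‖d ⬝ᵥ v‖ ^ 2 * (2 * RCLike.re (star y * t) + z) := by
  rw [star_dotProduct_dissipationMatrix_mulVec ht, mul_star_add_star_mul_eq_two_mul_re,
    ← starRingEnd_apply, RCLike.conj_mul]
  exact_mod_cast RCLike.ofReal_re (K := 𝕜) _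

theorem dissipative_x_zero_iff_quadratic_general {d m v : ι → 𝕜} (hden : d ⬝ᵥ v ≠ 0)
    (y : 𝕜) (z : ℝ) :
    2 * RCLike.re (star y * ((m ⬝ᵥ v) / (d ⬝ᵥ v))) + z ≤ 0 ↔
      RCLike.re (star v ⬝ᵥ (dissipationMatrix d m y (z : 𝕜) *ᵥ v)) ≤ 0 := by
  have hpos : 0 < ‖d ⬝ᵥ v‖ ^ 2 := by positivity
  rw [re_star_dotProduct_dissipationMatrix_mulVec (div_mul_cancel₀ _ hden).symm,
    ← smul_eq_mul (‖d ⬝ᵥ v‖ ^ 2), smul_nonpos_iff_nonpos_of_pos_left hpos]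

end RCLike

section TransferFunction

variable {n : ℕ}

/-- The row vector `[Z, c]`, which represents the affine form `c + Z·θ` as the linear form
`[Z, c]·θ̄` in the augmented vector `θ̄ = [θᵀ, 1]ᵀ`. -/
def augmentedRow (Z : Fin n → ℂ) (c : ℂ) : Fin n ⊕ Unit → ℂ :=
  Sum.elim Z fun _ => c

theorem augmentedRow_dotProduct_thetaBar (Z : Fin n → ℂ) (c : ℂ) (θ : Fin n → ℝ) :
    augmentedRow Z c ⬝ᵥ thetaBar θ = c + ∑ i, Z i * (θ i : ℂ) := by
  simp [augmentedRow, thetaBar, dotProduct, add_comm]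

theorem Tval_eq_dotProduct_div_dotProduct (e : ℂ) (ZN ZD : Fin n → ℂ) (θ : Fin n → ℝ) :
    Tval e ZN ZD θ =
      (augmentedRow ZN e ⬝ᵥ thetaBar θ) / (augmentedRow ZD 1 ⬝ᵥ thetaBar θ) := by
  simp only [Tval, augmentedRow_dotProduct_thetaBar]

theorem A2mat_eq_vecMulVec (e : ℂ) (ZN ZD : Fin n → ℂ) :
    A2mat e ZN ZD = vecMulVec (star (augmentedRow ZD 1)) (augmentedRow ZN e) := by
  ext (i | i) (j | j) <;> simp [A2mat, augmentedRow, vecMulVec_apply]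

theorem A1mat_eq_vecMulVec (ZD : Fin n → ℂ) :
    A1mat ZD = vecMulVec (star (augmentedRow ZD 1)) (augmentedRow ZD 1) := by
  ext (i | i) (j | j) <;> simp [A1mat, augmentedRow, vecMulVec_apply]

theorem dissipationMatrix_augmentedRow (e : ℂ) (ZN ZD : Fin n → ℂ) (y z : ℂ) :
    dissipationMatrix (augmentedRow ZD 1) (augmentedRow ZN e) y z =
      y • (A2mat e ZN ZD)ᴴ + star y • A2mat e ZN ZD + z • A1mat ZD := by
  rw [dissipationMatrix, A1mat_eq_vecMulVec, A2mat_eq_vecMulVec]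

end TransferFunction

/-- For `y ∈ ℂ`, `z ∈ ℝ` and `θ` with `1 + Z_D·θ ≠ 0`, the transfer function value
`T(θ) = (e + Z_N·θ)/(1 + Z_D·θ)` satisfies `2Re(conj(y)·T(θ)) + z ≤ 0` iff the augmented
real vector `θ̄ = [θᵀ, 1]ᵀ` satisfies `θ̄ᵀ(A₂*·y + conj(y)·A₂ + z·A₁)θ̄ ≤ 0`. -/
theorem dissipative_x_zero_iff_quadratic {n : ℕ} (e : ℂ) (ZN ZD : Fin n → ℂ)
    (y : ℂ) (z : ℝ)
    (θ : Fin n → ℝ) (hden : (1 : ℂ) + ∑ i, ZD i * (θ i : ℂ) ≠ 0) :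
    2 * (starRingEnd ℂ y * Tval e ZN ZD θ).re + z ≤ 0 ↔
      (star (thetaBar θ) ⬝ᵥ
          ((y • (A2mat e ZN ZD)ᴴ + starRingEnd ℂ y • A2mat e ZN ZD +
              (z : ℂ) • A1mat ZD) *ᵥ thetaBar θ)).re ≤ 0 := by
  rw [Tval_eq_dotProduct_div_dotProduct, starRingEnd_apply, ← dissipationMatrix_augmentedRow]
  exact dissipative_x_zero_iff_quadratic_general
    (by rwa [augmentedRow_dotProduct_thetaBar]) y z
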